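/- Let k > 0 and μ ∈ (0,1). The PGN(μ,k) distribution is absolutely continuous with respect to Lebesgue measure on ℝ, with density f_X given by f_X(x) = ((x²)^{(k−1)/2} / (Γ(k/2) · 2^{k/2−1})) · ∫_{1/2}^{1} (cos²(πu))^{−k/2} · exp(−x²/(2cos²(πu))) · f_U(u) du for x < 0, and f_X(x) = ((x²)^{(k−1)/2} / (Γ(k/2) · 2^{k/2−1})) · ∫_{0}^{1/2} (cos²(πu))^{−k/2} · exp(−x²/(2cos²(πu))) · f_U(u) du for x ≥ 0. That is, PGN(μ,k) equals the measure with density f_X with respect to Lebesgue measure. -/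

import Mathlib

open MeasureTheory Real Set

/-- Density of the chi-squared distribution with `k` degrees of freedom. -/
noncomputable def chiSqDensity (k : ℝ) (v : ℝ) : ℝ :=
  if 0 < v then v ^ (k / 2 - 1) * Real.exp (-v / 2) / ((2 : ℝ) ^ (k / 2) * Real.Gamma (k / 2))
  else 0

/-- The Beta function `B(a,b) = Γ(a)Γ(b)/Γ(a+b)`. -/
noncomputable def realBeta (a b : ℝ) : ℝ := Real.Gamma a * Real.Gamma b / Real.Gamma (a + b)

/-- Density of the Beta(2μ, 2(1-μ)) distribution. -/
noncomputable def betaDensity (μ : ℝ) (u : ℝ) : ℝ :=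
  if 0 < u ∧ u < 1 then
    u ^ (2 * μ - 1) * (1 - u) ^ (1 - 2 * μ) / realBeta (2 * μ) (2 * (1 - μ))
  else 0

/-- The chi-squared distribution with `k` degrees of freedom, as a measure on ℝ. -/
noncomputable def chiSqMeasure (k : ℝ) : Measure ℝ :=
  volume.withDensity (fun v => ENNReal.ofReal (chiSqDensity k v))

/-- The Beta(2μ, 2(1-μ)) distribution, as a measure on ℝ. -/
noncomputable def betaMeasure (μ : ℝ) : Measure ℝ :=
  volume.withDensity (fun u => ENNReal.ofReal (betaDensity μ u))

/-- The polar-generalized normal distribution PGN(μ, k): the pushforward of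
(chi-squared k) ⊗ (Beta(2μ, 2(1-μ))) under `(v, u) ↦ √v · cos (π u)`. -/
noncomputable def PGN (μ k : ℝ) : Measure ℝ :=
  Measure.map (fun p : ℝ × ℝ => Real.sqrt p.1 * Real.cos (π * p.2))
    ((chiSqMeasure k).prod (betaMeasure μ))

/-- The chi-squared distribution is the gamma distribution with shape `k / 2` and rate `1 / 2`. -/
lemma chiSqMeasure_eq_gammaMeasure (k : ℝ) :
    chiSqMeasure k = ProbabilityTheory.gammaMeasure (k / 2) (1 / 2) := by
  refine withDensity_congr_ae ?_
  filter_upwards [Measure.ae_ne volume (0 : ℝ)] with v hv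
  rcases lt_or_gt_of_ne hv with h | h
  · simp [chiSqDensity, ProbabilityTheory.gammaPDF_of_neg h, h.not_gt]
  · rw [ProbabilityTheory.gammaPDF_of_nonneg h.le, chiSqDensity, if_pos h, one_div,
      Real.inv_rpow zero_le_two]
    congr 1
    rw [show -(2⁻¹ * v) = -v / 2 by ring]
    ring

lemma betaDensity_eq_betaPDFReal (μ : ℝ) :
    betaDensity μ = ProbabilityTheory.betaPDFReal (2 * μ) (2 * (1 - μ)) := by
  ext u
  simp only [betaDensity, ProbabilityTheory.betaPDFReal, realBeta, ProbabilityTheory.beta]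
  rw [show 2 * (1 - μ) - 1 = 1 - 2 * μ by ring]
  split_ifs
  · ring
  · rfl

lemma betaDensity_nonneg {μ : ℝ} (hμ : μ ∈ Ioo (0 : ℝ) 1) (u : ℝ) : 0 ≤ betaDensity μ u := by
  rw [betaDensity_eq_betaPDFReal]
  by_cases hu : 0 < u ∧ u < 1
  · exact (ProbabilityTheory.betaPDFReal_pos hu.1 hu.2 (by linarith [hμ.1])
      (by linarith [hμ.2])).le
  · simp [ProbabilityTheory.betaPDFReal, hu]

@[fun_prop]
lemma measurable_betaDensity (μ : ℝ) : Measurable (betaDensity μ) := by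
  rw [betaDensity_eq_betaPDFReal]
  fun_prop

@[fun_prop]
lemma measurable_chiSqDensity (k : ℝ) : Measurable (chiSqDensity k) :=
  Measurable.ite measurableSet_Ioi (by fun_prop) (by fun_prop)

lemma isFiniteMeasure_PGN {k μ : ℝ} (hk : 0 < k) (hμ : μ ∈ Ioo (0 : ℝ) 1) :
    IsFiniteMeasure (PGN μ k) := by
  have hchi : IsProbabilityMeasure (chiSqMeasure k) := by
    rw [chiSqMeasure_eq_gammaMeasure]
    exact ProbabilityTheory.isProbabilityMeasure_gammaMeasure (by positivity) (by norm_num)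
  have hbeta : IsProbabilityMeasure (betaMeasure μ) := by
    rw [betaMeasure, betaDensity_eq_betaPDFReal]
    exact ProbabilityTheory.isProbabilityMeasureBeta (by linarith [hμ.1]) (by linarith [hμ.2])
  unfold PGN
  infer_instance

/-- The density at `x` of `√V * c`, where `V` is chi-squared with `k` degrees of freedom. -/
noncomputable def scaledChiDensity (k c x : ℝ) : ℝ :=
  if 0 < x * c then
    (x ^ 2) ^ ((k - 1) / 2) / (Real.Gamma (k / 2) * (2 : ℝ) ^ (k / 2 - 1)) *
      ((c ^ 2) ^ (-(k / 2)) * Real.exp (-(x ^ 2 / (2 * c ^ 2))))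
  else 0

lemma scaledChiDensity_nonneg {k : ℝ} (hk : 0 < k) (c x : ℝ) : 0 ≤ scaledChiDensity k c x := by
  unfold scaledChiDensity
  split_ifs
  · have := Real.Gamma_pos_of_pos (half_pos hk)
    positivity
  · rfl

@[fun_prop]
lemma measurable_scaledChiDensity (k : ℝ) :
    Measurable (fun p : ℝ × ℝ => scaledChiDensity k p.1 p.2) :=
  Measurable.ite (measurableSet_lt measurable_const (by fun_prop)) (by fun_prop) (by fun_prop)

/-- The Jacobian identity behind the substitution `v = x ^ 2 / c ^ 2`. -/
lemma abs_deriv_mul_chiSqDensity (k : ℝ) {c x : ℝ} (hxc : 0 < x * c) :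
    |2 * x / c ^ 2| * chiSqDensity k (x ^ 2 / c ^ 2) = scaledChiDensity k c x := by
  have hx : x ≠ 0 := left_ne_zero_of_mul hxc.ne'
  have hc : c ≠ 0 := right_ne_zero_of_mul hxc.ne'
  have hx2 : 0 < x ^ 2 := by positivity
  have hc2 : 0 < c ^ 2 := by positivity
  have habs : |x| = (x ^ 2) ^ (1 / 2 : ℝ) := by rw [← Real.sqrt_eq_rpow, Real.sqrt_sq_eq_abs]
  rw [chiSqDensity, scaledChiDensity, if_pos hxc, if_pos (by positivity), abs_div, abs_mul,
    abs_of_pos hc2, abs_two, habs, Real.div_rpow hx2.le hc2.le,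
    show (k - 1) / 2 = 1 / 2 + (k / 2 - 1) by ring, Real.rpow_add hx2,
    Real.rpow_sub_one two_ne_zero, Real.rpow_neg hc2.le,
    Real.rpow_sub_one hc2.ne', show -(x ^ 2 / c ^ 2) / 2 = -(x ^ 2 / (2 * c ^ 2)) by field_simp]
  field_simp

lemma lintegral_chiSqDensity_mul_comp (k : ℝ) {c : ℝ} (hc : c ≠ 0) (f : ℝ → ENNReal) :
    ∫⁻ v, ENNReal.ofReal (chiSqDensity k v) * f (√v * c) =
      ∫⁻ x, ENNReal.ofReal (scaledChiDensity k c x) * f x := by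
  have hS : MeasurableSet {x : ℝ | 0 < x * c} :=
    measurableSet_lt measurable_const (by fun_prop)
  have sqrt_mul {x : ℝ} (hx : 0 < x * c) : √(x ^ 2 / c ^ 2) * c = x := by
    rw [← div_pow, Real.sqrt_sq]
    · field_simp
    · rw [show x / c = x * c / c ^ 2 by field_simp]
      positivity
  have himage : (fun x : ℝ => x ^ 2 / c ^ 2) '' {x | 0 < x * c} = Ioi 0 := by
    ext v
    constructor
    · rintro ⟨x, hx, rfl⟩
      have : x ≠ 0 := left_ne_zero_of_mul (ne_of_gt hx)
      simp only [mem_Ioi]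
      positivity
    · intro hv
      refine ⟨√v * c, ?_, ?_⟩
      · have : 0 < √v := Real.sqrt_pos.2 hv
        have : 0 < √v * (c * c) := mul_pos this (mul_self_pos.2 hc)
        rwa [← mul_assoc] at this
      · simp only [mul_pow, Real.sq_sqrt (le_of_lt hv)]
        field_simp
  have hinj : InjOn (fun x : ℝ => x ^ 2 / c ^ 2) {x | 0 < x * c} := by
    intro x hx y hy hxy
    rw [← sqrt_mul hx, ← sqrt_mul hy]
    simp only at hxy
    rw [hxy]
  have hderiv : ∀ x ∈ {x : ℝ | 0 < x * c},
      HasDerivWithinAt (fun x : ℝ => x ^ 2 / c ^ 2) (2 * x / c ^ 2) {x | 0 < x * c} x := by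
    intro x _
    simpa using (((hasDerivAt_id x).pow 2).div_const (c ^ 2)).hasDerivWithinAt
  have hleft : ∫⁻ v, ENNReal.ofReal (chiSqDensity k v) * f (√v * c) =
      ∫⁻ v in Ioi 0, ENNReal.ofReal (chiSqDensity k v) * f (√v * c) := by
    rw [← lintegral_indicator measurableSet_Ioi]
    congr 1 with v
    by_cases hv : 0 < v <;> simp [hv, chiSqDensity]
  have hright : ∫⁻ x, ENNReal.ofReal (scaledChiDensity k c x) * f x =
      ∫⁻ x in {x | 0 < x * c}, ENNReal.ofReal (scaledChiDensity k c x) * f x := by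
    rw [← lintegral_indicator hS]
    congr 1 with x
    by_cases hx : 0 < x * c <;> simp [hx, scaledChiDensity]
  rw [hleft, hright, ← himage, lintegral_image_eq_lintegral_abs_deriv_mul hS hderiv hinj]
  refine setLIntegral_congr_fun hS fun x hx => ?_
  rw [sqrt_mul hx, ← mul_assoc, ← ENNReal.ofReal_mul (abs_nonneg _),
    abs_deriv_mul_chiSqDensity k hx]

lemma cos_pi_mul_pos {u : ℝ} (h0 : 0 < u) (h : u < 1 / 2) : 0 < Real.cos (π * u) :=
  Real.cos_pos_of_mem_Ioo ⟨by nlinarith [Real.pi_pos], by nlinarith [Real.pi_pos]⟩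

lemma cos_pi_mul_neg {u : ℝ} (h : 1 / 2 < u) (h1 : u < 1) : Real.cos (π * u) < 0 :=
  Real.cos_neg_of_pi_div_two_lt_of_lt (by nlinarith [Real.pi_pos]) (by nlinarith [Real.pi_pos])

lemma PGN_eq_withDensity_lintegral {k μ : ℝ} (hk : 0 < k) :
    PGN μ k = volume.withDensity (fun x => ∫⁻ u,
      ENNReal.ofReal (scaledChiDensity k (Real.cos (π * u)) x * betaDensity μ u)) := by
  refine Measure.ext_of_lintegral _ fun f hf => ?_
  rw [PGN, lintegral_map hf (by fun_prop), chiSqMeasure, betaMeasure,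
    prod_withDensity (by fun_prop) (by fun_prop),
    lintegral_withDensity_eq_lintegral_mul _ (by fun_prop) (by fun_prop),
    lintegral_prod_symm _ (by fun_prop),
    lintegral_withDensity_eq_lintegral_mul _ (by fun_prop) hf]
  simp only [Pi.mul_apply]
  calc
    _ = ∫⁻ u, ∫⁻ x, ENNReal.ofReal (scaledChiDensity k (Real.cos (π * u)) x *
          betaDensity μ u) * f x := by
      refine lintegral_congr_ae ?_
      filter_upwards [Measure.ae_ne volume (1 / 2 : ℝ)] with u hu
      by_cases hu01 : 0 < u ∧ u < 1
      · have hc : Real.cos (π * u) ≠ 0 := by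
          rcases lt_or_gt_of_ne hu with h | h
          · exact (cos_pi_mul_pos hu01.1 h).ne'
          · exact (cos_pi_mul_neg h hu01.2).ne
        simp_rw [ENNReal.ofReal_mul (scaledChiDensity_nonneg hk _ _), mul_right_comm _ _ (f _)]
        rw [lintegral_mul_const' _ _ ENNReal.ofReal_ne_top,
          lintegral_mul_const' _ _ ENNReal.ofReal_ne_top, lintegral_chiSqDensity_mul_comp k hc]
      · simp [betaDensity, hu01]
    _ = ∫⁻ x, ∫⁻ u, ENNReal.ofReal (scaledChiDensity k (Real.cos (π * u)) x *
          betaDensity μ u) * f x :=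
      lintegral_lintegral_swap (by fun_prop)
    _ = _ := by
      refine lintegral_congr fun x => ?_
      rw [lintegral_mul_const _ (by fun_prop)]

lemma integral_scaledChiDensity_mul_betaDensity {k μ x : ℝ} {a b : ℝ} (hab : a ≤ b)
    (h : ∀ u, u ≠ 1 / 2 → (0 < u ∧ u < 1 ∧ 0 < x * Real.cos (π * u) ↔ u ∈ Ioo a b)) :
    ∫ u, scaledChiDensity k (Real.cos (π * u)) x * betaDensity μ u =
      (x ^ 2) ^ ((k - 1) / 2) / (Real.Gamma (k / 2) * (2 : ℝ) ^ (k / 2 - 1)) *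
          ∫ u in a..b, (Real.cos (π * u) ^ 2) ^ (-(k / 2)) *
              Real.exp (-(x ^ 2 / (2 * Real.cos (π * u) ^ 2))) * betaDensity μ u := by
  rw [intervalIntegral.integral_of_le hab, integral_Ioc_eq_integral_Ioo, ← integral_const_mul,
    ← integral_indicator measurableSet_Ioo]
  refine integral_congr_ae ?_
  filter_upwards [Measure.ae_ne volume (1 / 2 : ℝ)] with u hu
  specialize h u hu
  by_cases hu' : u ∈ Ioo a b
  · rw [indicator_of_mem hu', scaledChiDensity, if_pos (h.2 hu').2.2]
    ring
  · rw [indicator_of_notMem hu']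
    by_cases hu01 : 0 < u ∧ u < 1
    · rw [scaledChiDensity, if_neg fun hx => hu' (h.1 ⟨hu01.1, hu01.2, hx⟩), zero_mul]
    · rw [betaDensity, if_neg hu01, mul_zero]

theorem stmt1 (k μ : ℝ) (hk : 0 < k) (hμ : μ ∈ Set.Ioo (0:ℝ) 1) :
    PGN μ k = volume.withDensity (fun x : ℝ => ENNReal.ofReal (
      if x < 0 then
        (x ^ 2) ^ ((k - 1) / 2) / (Real.Gamma (k / 2) * (2 : ℝ) ^ (k / 2 - 1)) *
          ∫ u in (1/2 : ℝ)..1,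
            (Real.cos (π * u) ^ 2) ^ (-(k / 2)) *
              Real.exp (-(x ^ 2 / (2 * Real.cos (π * u) ^ 2))) * betaDensity μ u
      else
        (x ^ 2) ^ ((k - 1) / 2) / (Real.Gamma (k / 2) * (2 : ℝ) ^ (k / 2 - 1)) *
          ∫ u in (0 : ℝ)..(1/2),
            (Real.cos (π * u) ^ 2) ^ (-(k / 2)) *
              Real.exp (-(x ^ 2 / (2 * Real.cos (π * u) ^ 2))) * betaDensity μ u)) := by
  have := isFiniteMeasure_PGN hk hμ
  have hmeas : Measurable fun p : ℝ × ℝ =>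
      scaledChiDensity k (Real.cos (π * p.2)) p.1 * betaDensity μ p.2 := by
    fun_prop
  have hfin : ∀ᵐ x : ℝ, ∫⁻ u,
      ENNReal.ofReal (scaledChiDensity k (Real.cos (π * u)) x * betaDensity μ u) < ⊤ := by
    refine ae_lt_top (Measurable.lintegral_prod_right' hmeas.ennreal_ofReal) ?_
    rw [← setLIntegral_univ, ← withDensity_apply _ MeasurableSet.univ,
      ← PGN_eq_withDensity_lintegral hk]
    exact measure_ne_top _ _
  rw [PGN_eq_withDensity_lintegral hk]
  refine withDensity_congr_ae ?_
  filter_upwards [hfin, Measure.ae_ne volume (0 : ℝ)] with x hx hx0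
  rw [← ENNReal.ofReal_toReal hx.ne, ← integral_eq_lintegral_of_nonneg_ae
    (.of_forall fun u => mul_nonneg (scaledChiDensity_nonneg hk _ _) (betaDensity_nonneg hμ u))
    (hmeas.comp measurable_prodMk_left).aestronglyMeasurable]
  congr 1
  split_ifs with hneg
  · refine integral_scaledChiDensity_mul_betaDensity (by norm_num) fun u hu => ⟨?_, ?_⟩
    · rintro ⟨h0, h1, hpos⟩
      refine ⟨lt_of_not_ge fun h => ?_, h1⟩
      nlinarith [cos_pi_mul_pos h0 (lt_of_le_of_ne h hu)]
    · rintro ⟨h, h1⟩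
      exact ⟨by linarith, h1, mul_pos_of_neg_of_neg hneg (cos_pi_mul_neg h h1)⟩
  · have hpos : 0 < x := lt_of_le_of_ne (not_lt.1 hneg) hx0.symm
    refine integral_scaledChiDensity_mul_betaDensity (by norm_num) fun u hu => ⟨?_, ?_⟩
    · rintro ⟨h0, h1, hc⟩
      refine ⟨h0, lt_of_not_ge fun h => ?_⟩
      nlinarith [cos_pi_mul_neg (lt_of_le_of_ne h hu.symm) h1]
    · rintro ⟨h0, h⟩
      exact ⟨h0, by linarith, mul_pos hpos (cos_pi_mul_pos h0 h)⟩
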